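/- arXiv:0903.5519 — 2 statements merged into one kernel-verified Lean document; each statement's English description precedes it below -/
import Mathlib

section
/- Let d ∈ [−3/4 + (√5)/4, 0] and let x, y be real numbers with 1 ≥ x ≥ y ≥ d−x−y ≥ −d−1. Then the quintuple (1, x, y, d−x−y, −d−1) is symmetrically realizable if and only if x ≤ d + 1 and s₃(x,y,d) ≥ 0. -/
open Polynomial Matrix

/-!
Write `e = d + 1`; the spectrum `(1, x, y, z, -e)` has sum zero.

For necessity, a nonnegative matrix of trace zero has zero diagonal and all its powers have
nonnegative trace. Positive semidefiniteness of `A + e` bounds every off-diagonal entry by `e`.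
Conversely, if an eigenvector for `l > 0` has at most two positive entries, then its largest entry
exhibits an off-diagonal entry of size at least `l`. In dimension five, among two orthogonal
eigenvectors and their negatives one always has this sign pattern, so the second largest
eigenvalue is at most `e`.

For sufficiency, look for a matrix invariant under a reflection with one fixed index. Its spectrum
splits into the two eigenvalues `y, -e` on odd vectors and the three eigenvalues `1, x, z` on even
vectors, and the resulting equations for the entries have nonnegative solutions.
-/

open Finset

/-- The family `a` is the spectrum of a symmetric matrix with nonnegative entries. -/
def IsSymmRealizable {n : Type*} [Fintype n] [DecidableEq n] (a : n → ℝ) : Prop :=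
  ∃ A : Matrix n n ℝ, A.IsSymm ∧ (∀ i j, 0 ≤ A i j) ∧ A.charpoly = ∏ i, (X - C (a i))

/-- The set of indices at which `v` is positive, as a finset so that its cardinality can be
compared with that of the index type. -/
noncomputable def posSupport {n : Type*} [Fintype n] (v : n → ℝ) : Finset n := {i | 0 < v i}

section SignPatterns

variable {n : Type*} [Fintype n]

theorem mem_posSupport {v : n → ℝ} {i : n} : i ∈ posSupport v ↔ 0 < v i := by
  simp [posSupport]

theorem posSupport_nonempty {v : n → ℝ} : (posSupport v).Nonempty ↔ ¬v ≤ 0 := by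
  simp [Finset.Nonempty, mem_posSupport, Pi.le_def]

theorem two_mul_card_le_or_of_disjoint {s t : Finset n} (h : Disjoint s t) :
    2 * #s ≤ Fintype.card n ∨ 2 * #t ≤ Fintype.card n := by
  classical
  have hunion := card_le_univ (s ∪ t)
  rw [card_union_of_disjoint h] at hunion
  lia

theorem disjoint_posSupport_neg (v : n → ℝ) : Disjoint (posSupport v) (posSupport (-v)) :=
  disjoint_left.2 fun i hpos hneg => by
    have hneg' : 0 < -v i := (mem_posSupport (v := -v)).1 hneg
    exact lt_asymm (mem_posSupport.1 hpos) (neg_pos.1 hneg')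

theorem disjoint_posSupport_of_dotProduct_eq_zero {u v : n → ℝ} (hu : 0 ≤ u) (hv : 0 ≤ v)
    (huv : u ⬝ᵥ v = 0) : Disjoint (posSupport u) (posSupport v) := by
  refine disjoint_left.2 fun i hiu hiv => ?_
  have hzero : u i * v i = 0 :=
    (sum_eq_zero_iff_of_nonneg fun j _ => mul_nonneg (hu j) (hv j)).1 huv i (mem_univ i)
  exact (mul_pos (mem_posSupport.1 hiu) (mem_posSupport.1 hiv)).ne' hzero

theorem exists_two_mul_card_posSupport_le_or_nonneg (v : n → ℝ) :
    (∃ w, (w = v ∨ w = -v) ∧ (posSupport w).Nonempty ∧ 2 * #(posSupport w) ≤ Fintype.card n) ∨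
      ∃ w, (w = v ∨ w = -v) ∧ 0 ≤ w := by
  by_cases hneg : v ≤ 0
  · exact .inr ⟨-v, .inr rfl, neg_nonneg.2 hneg⟩
  by_cases hpos : -v ≤ 0
  · exact .inr ⟨v, .inl rfl, neg_nonpos.1 hpos⟩
  obtain hcard | hcard := two_mul_card_le_or_of_disjoint (disjoint_posSupport_neg v)
  · exact .inl ⟨v, .inl rfl, posSupport_nonempty.2 hneg, hcard⟩
  · exact .inl ⟨-v, .inr rfl, posSupport_nonempty.2 hpos, hcard⟩

theorem exists_two_mul_card_posSupport_le {u v : n → ℝ} (hu : u ≠ 0) (hv : v ≠ 0)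
    (huv : u ⬝ᵥ v = 0) :
    ∃ w, ((w = u ∨ w = -u) ∨ (w = v ∨ w = -v)) ∧
      (posSupport w).Nonempty ∧ 2 * #(posSupport w) ≤ Fintype.card n := by
  obtain ⟨w, hw, hsmall⟩ | ⟨u', hu', hu'_nonneg⟩ := exists_two_mul_card_posSupport_le_or_nonneg u
  · exact ⟨w, .inl hw, hsmall⟩
  obtain ⟨w, hw, hsmall⟩ | ⟨v', hv', hv'_nonneg⟩ := exists_two_mul_card_posSupport_le_or_nonneg v
  · exact ⟨w, .inr hw, hsmall⟩
  have hu'_ne : u' ≠ 0 := by rcases hu' with rfl | rfl <;> simpa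
  have hv'_ne : v' ≠ 0 := by rcases hv' with rfl | rfl <;> simpa
  have huv' : u' ⬝ᵥ v' = 0 := by
    rcases hu' with rfl | rfl <;> rcases hv' with rfl | rfl <;> simpa
  obtain hcard | hcard := two_mul_card_le_or_of_disjoint
    (disjoint_posSupport_of_dotProduct_eq_zero hu'_nonneg hv'_nonneg huv')
  · exact ⟨u', .inl hu', posSupport_nonempty.2 fun h => hu'_ne (h.antisymm hu'_nonneg), hcard⟩
  · exact ⟨v', .inr hv', posSupport_nonempty.2 fun h => hv'_ne (h.antisymm hv'_nonneg), hcard⟩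

end SignPatterns

section NonnegativeMatrices

variable {n : Type*} [Fintype n] {A : Matrix n n ℝ}

theorem apply_self_eq_zero_of_trace_eq_zero (hA : ∀ i j, 0 ≤ A i j) (htr : A.trace = 0) (i : n) :
    A i i = 0 :=
  (sum_eq_zero_iff_of_nonneg fun j _ => hA j j).1 htr i (mem_univ i)

theorem exists_le_sum_posSupport (hA : ∀ i j, 0 ≤ A i j) {v : n → ℝ} {l : ℝ}
    (hv : A *ᵥ v = l • v) (hpos : (posSupport v).Nonempty) :
    ∃ i ∈ posSupport v, l ≤ ∑ j ∈ posSupport v, A i j := by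
  obtain ⟨i, hi, hmax⟩ := exists_max_image (posSupport v) v hpos
  refine ⟨i, hi, le_of_mul_le_mul_right ?_ (mem_posSupport.1 hi)⟩
  calc l * v i = ∑ j, A i j * v j := (congrFun hv i).symm
    _ ≤ ∑ j ∈ posSupport v, A i j * v j := by
      classical
      rw [← sum_add_sum_compl (posSupport v)]
      refine add_le_of_nonpos_right (sum_nonpos fun j hj => ?_)
      have hvj : v j ≤ 0 := not_lt.1 (mem_posSupport.not.1 (mem_compl.1 hj))
      exact mul_nonpos_of_nonneg_of_nonpos (hA i j) hvj
    _ ≤ ∑ j ∈ posSupport v, A i j * v i :=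
      sum_le_sum fun j hj => mul_le_mul_of_nonneg_left (hmax j hj) (hA i j)
    _ = (∑ j ∈ posSupport v, A i j) * v i := (sum_mul ..).symm

theorem exists_ne_le_apply_of_card_posSupport_le_two (hA : ∀ i j, 0 ≤ A i j)
    (hdiag : ∀ i, A i i = 0) {v : n → ℝ} {l : ℝ} (hl : 0 < l) (hv : A *ᵥ v = l • v)
    (hpos : (posSupport v).Nonempty) (hcard : #(posSupport v) ≤ 2) :
    ∃ i j, i ≠ j ∧ l ≤ A i j := by
  classical
  obtain ⟨i, hi, hle⟩ := exists_le_sum_posSupport hA hv hpos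
  rw [← add_sum_erase _ _ hi, hdiag, zero_add] at hle
  have hne : ((posSupport v).erase i).Nonempty := nonempty_of_sum_ne_zero (hl.trans_le hle).ne'
  have herase : #((posSupport v).erase i) = 1 :=
    le_antisymm (by rw [card_erase_of_mem hi]; lia) hne.card_pos
  obtain ⟨j, hj⟩ := card_eq_one.1 herase
  have hji : j ≠ i := ne_of_mem_erase (hj ▸ mem_singleton_self j)
  exact ⟨i, j, hji.symm, by simpa [hj] using hle⟩

end NonnegativeMatrices

section Spectral

variable {n : Type*} [Fintype n] [DecidableEq n]

theorem exists_perm_comp_eq_of_map_univ_eq {m α : Type*} [Fintype m] {f g : m → α}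
    (h : (univ : Finset m).val.map f = (univ : Finset m).val.map g) :
    ∃ σ : Equiv.Perm m, f ∘ σ = g := by
  classical
  have hfiber (b : α) : Nonempty ({i // g i = b} ≃ {i // f i = b}) := by
    refine Fintype.card_eq.1 ?_
    have := congrArg (Multiset.count b) h
    simp only [Multiset.count_map] at this
    simpa [Fintype.card_subtype, Finset.card, eq_comm] using this.symm
  exact ⟨Equiv.ofFiberEquiv fun b => (hfiber b).some, funext fun i => Equiv.ofFiberEquiv_map _ i⟩

theorem exists_perm_eigenvalues_eq {A : Matrix n n ℝ} (hA : A.IsHermitian) {a : n → ℝ}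
    (ha : A.charpoly = ∏ i, (X - C (a i))) : ∃ σ : Equiv.Perm n, hA.eigenvalues ∘ σ = a := by
  refine exists_perm_comp_eq_of_map_univ_eq ?_
  have hroots := hA.roots_charpoly_eq_eigenvalues
  rw [ha, roots_prod _ _ (prod_ne_zero_iff.2 fun i _ => X_sub_C_ne_zero (a i))] at hroots
  simpa using hroots.symm

theorem trace_pow_eq_sum_eigenvalues_pow {A : Matrix n n ℝ} (hA : A.IsHermitian) (k : ℕ) :
    (A ^ k).trace = ∑ i, hA.eigenvalues i ^ k := by
  conv_lhs => rw [hA.spectral_theorem]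
  rw [← map_pow, diagonal_pow, Unitary.conjStarAlgAut_apply, trace_mul_cycle]
  simp

theorem posSemidef_add_smul_one {A : Matrix n n ℝ} (hA : A.IsHermitian) {e : ℝ}
    (he : ∀ i, -e ≤ hA.eigenvalues i) : (A + e • (1 : Matrix n n ℝ)).PosSemidef := by
  rw [posSemidef_iff_isHermitian_and_spectrum_nonneg, ← Algebra.algebraMap_eq_smul_one,
    ← spectrum.add_singleton_eq, hA.spectrum_real_eq_range_eigenvalues]
  refine ⟨hA.add (by simp [IsHermitian, Algebra.algebraMap_eq_smul_one]), ?_⟩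
  rintro _ ⟨_, ⟨i, rfl⟩, _, rfl, rfl⟩
  exact neg_le_iff_add_nonneg.1 (he i)

theorem two_mul_apply_le_add_of_posSemidef {m : Type*} {M : Matrix m m ℝ} (hM : M.PosSemidef)
    (i j : m) : 2 * M i j ≤ M i i + M j j := by
  have hquad := (hM.submatrix ![i, j]).dotProduct_mulVec_nonneg ![1, -1]
  have hsymm : M j i = M i j := hM.1.apply i j
  simp only [dotProduct, mulVec, Fin.sum_univ_two, submatrix_apply, Pi.star_apply, star_trivial,
    cons_val_zero, cons_val_one, cons_val_fin_one, hsymm] at hquad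
  linarith

theorem apply_le_of_neg_le_eigenvalues {A : Matrix n n ℝ} (hA : A.IsHermitian)
    (hdiag : ∀ i, A i i = 0) {e : ℝ} (he : ∀ i, -e ≤ hA.eigenvalues i) {i j : n} (hij : i ≠ j) :
    A i j ≤ e := by
  have h := two_mul_apply_le_add_of_posSemidef (posSemidef_add_smul_one hA he) i j
  simp only [Matrix.add_apply, Matrix.smul_apply, one_apply_eq, one_apply_ne hij, hdiag,
    smul_eq_mul] at h
  linarith

theorem exists_orthogonal_eigenvectors {A : Matrix n n ℝ} (hA : A.IsHermitian)
    {i j : n} (hij : i ≠ j) :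
    ∃ u v : n → ℝ, u ≠ 0 ∧ v ≠ 0 ∧ u ⬝ᵥ v = 0 ∧
      A *ᵥ u = hA.eigenvalues i • u ∧ A *ᵥ v = hA.eigenvalues j • v := by
  have hne (k : n) : (hA.eigenvectorBasis k).ofLp ≠ 0 :=
    (WithLp.ofLp_eq_zero 2).ne.2 (hA.eigenvectorBasis.orthonormal.ne_zero k)
  refine ⟨_, _, hne i, hne j, ?_, hA.mulVec_eigenvectorBasis i, hA.mulVec_eigenvectorBasis j⟩
  simpa [EuclideanSpace.inner_eq_star_dotProduct] using
    hA.eigenvectorBasis.orthonormal.2 hij.symm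

end Spectral

namespace IsSymmRealizable

variable {n : Type*} [Fintype n] [DecidableEq n] {a : n → ℝ}

theorem exists_eigenvalues_eq (ha : IsSymmRealizable a) :
    ∃ (A : Matrix n n ℝ) (hA : A.IsHermitian) (σ : Equiv.Perm n),
      (∀ i j, 0 ≤ A i j) ∧ hA.eigenvalues ∘ σ = a := by
  obtain ⟨A, hsymm, hnonneg, hchar⟩ := ha
  have hA : A.IsHermitian := isHermitian_iff_isSymm.2 hsymm
  obtain ⟨σ, hσ⟩ := exists_perm_eigenvalues_eq hA hchar
  exact ⟨A, hA, σ, hnonneg, hσ⟩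

theorem sum_pow_nonneg (ha : IsSymmRealizable a) (k : ℕ) : 0 ≤ ∑ i, a i ^ k := by
  obtain ⟨A, hA, σ, hnonneg, rfl⟩ := ha.exists_eigenvalues_eq
  calc 0 ≤ (A ^ k).trace := sum_nonneg fun i _ => pow_apply_nonneg hnonneg k i i
    _ = ∑ i, hA.eigenvalues i ^ k := trace_pow_eq_sum_eigenvalues_pow hA k
    _ = ∑ i, hA.eigenvalues (σ i) ^ k := (Equiv.sum_comp σ fun i => hA.eigenvalues i ^ k).symm

theorem min_le_of_forall_neg_le (ha : IsSymmRealizable a) (hcard : Fintype.card n ≤ 5)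
    (hsum : ∑ i, a i = 0) {e : ℝ} (he : ∀ i, -e ≤ a i) {i j : n} (hij : i ≠ j) :
    min (a i) (a j) ≤ e := by
  obtain ⟨A, hA, σ, hnonneg, rfl⟩ := ha.exists_eigenvalues_eq
  have htr : A.trace = 0 := by
    simpa [hA.trace_eq_sum_eigenvalues] using (Equiv.sum_comp σ hA.eigenvalues).symm.trans hsum
  have hdiag := apply_self_eq_zero_of_trace_eq_zero hnonneg htr
  have hentry {k l : n} (hkl : k ≠ l) : A k l ≤ e :=
    apply_le_of_neg_le_eigenvalues hA hdiag (fun m => by simpa using he (σ.symm m)) hkl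
  by_contra! hlt
  have hmin_pos : 0 < min (hA.eigenvalues (σ i)) (hA.eigenvalues (σ j)) :=
    ((hnonneg i j).trans (hentry hij)).trans_lt hlt
  obtain ⟨u, v, hu, hv, huv, hAu, hAv⟩ :=
    exists_orthogonal_eigenvectors hA (σ.injective.ne hij)
  obtain ⟨w, hw, hpos, hsmall⟩ := exists_two_mul_card_posSupport_le hu hv huv
  obtain ⟨l, hl, hAw⟩ :
      ∃ l, min (hA.eigenvalues (σ i)) (hA.eigenvalues (σ j)) ≤ l ∧ A *ᵥ w = l • w := by
    rcases hw with (rfl | rfl) | (rfl | rfl)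
    · exact ⟨_, min_le_left _ _, hAu⟩
    · exact ⟨_, min_le_left _ _, by rw [mulVec_neg, hAu, smul_neg]⟩
    · exact ⟨_, min_le_right _ _, hAv⟩
    · exact ⟨_, min_le_right _ _, by rw [mulVec_neg, hAv, smul_neg]⟩
  obtain ⟨p, q, hpq, hle⟩ := exists_ne_le_apply_of_card_posSupport_le_two hnonneg hdiag
    (hmin_pos.trans_le hl) hAw hpos (by lia)
  exact (hlt.trans_le (hl.trans hle)).not_ge (hentry hpq)

end IsSymmRealizable

section Construction

/-- The symmetric matrices of size five with zero diagonal that are invariant under the reflection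
exchanging the indices `1 ↔ 2` and `3 ↔ 4`. -/
def reflectionMatrix (p q r s t w : ℝ) : Matrix (Fin 5) (Fin 5) ℝ :=
  !![0, p, p, q, q; p, 0, r, t, w; p, r, 0, w, t; q, t, w, 0, s; q, w, t, s, 0]

theorem reflectionMatrix_isSymm (p q r s t w : ℝ) : (reflectionMatrix p q r s t w).IsSymm := by
  ext i j
  fin_cases i <;> fin_cases j <;> rfl

-- The quadratic factor is the action on odd vectors, the cubic one that on even vectors.
theorem eval_charpoly_reflectionMatrix (p q r s t w u : ℝ) :
    (reflectionMatrix p q r s t w).charpoly.eval u =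
      (u ^ 2 + (r + s) * u + (r * s - (t - w) ^ 2)) *
        (u ^ 3 - (r + s) * u ^ 2 + (r * s - (t + w) ^ 2 - 2 * p ^ 2 - 2 * q ^ 2) * u -
          (4 * p * q * (t + w) - 2 * p ^ 2 * s - 2 * q ^ 2 * r)) := by
  have hmat : scalar (Fin 5) u - reflectionMatrix p q r s t w =
      !![u, -p, -p, -q, -q; -p, u, -r, -t, -w; -p, -r, u, -w, -t; -q, -t, -w, u, -s;
        -q, -w, -t, -s, u] := by
    ext i j
    fin_cases i <;> fin_cases j <;> simp [reflectionMatrix]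
  rw [eval_charpoly, hmat]
  simp [det_succ_row_zero, Fin.sum_univ_succ, Fin.succAbove]
  ring

variable {a x y z e : ℝ}

theorem isSymmRealizable_of_reflectionMatrix {p q r s t w : ℝ} (hp : 0 ≤ p) (hq : 0 ≤ q)
    (hr : 0 ≤ r) (hs : 0 ≤ s) (ht : 0 ≤ t) (hw : 0 ≤ w)
    (odd_trace : r + s = e - y) (odd_det : r * s - (t - w) ^ 2 = -(y * e))
    (even_trace : r + s = a + x + z)
    (even_minors : r * s - (t + w) ^ 2 - 2 * p ^ 2 - 2 * q ^ 2 = a * x + a * z + x * z)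
    (even_det : 4 * p * q * (t + w) - 2 * p ^ 2 * s - 2 * q ^ 2 * r = a * x * z) :
    IsSymmRealizable ![a, x, y, z, -e] := by
  refine ⟨reflectionMatrix p q r s t w, reflectionMatrix_isSymm p q r s t w, fun i j => ?_, ?_⟩
  · fin_cases i <;> fin_cases j <;> simp [reflectionMatrix, *]
  refine Polynomial.funext fun u => ?_
  have hfactor : (reflectionMatrix p q r s t w).charpoly.eval u =
      (u ^ 2 + (e - y) * u + -(y * e)) *
        (u ^ 3 - (a + x + z) * u ^ 2 + (a * x + a * z + x * z) * u - a * x * z) := by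
    rw [eval_charpoly_reflectionMatrix, odd_det, even_minors, even_det, ← odd_trace, ← even_trace]
  rw [hfactor]
  simp only [Fin.prod_univ_five, eval_mul, eval_sub, eval_X, eval_C, Matrix.cons_val]
  ring

theorem sum_pow_three_eq_of_sum_eq (hsum : a + x + y + z = e) :
    a ^ 3 + x ^ 3 + y ^ 3 + z ^ 3 + (-e) ^ 3 =
      3 * ((-(y * e) - (a * x + a * z + x * z)) * (e - y) + a * x * z) := by
  subst hsum
  ring

-- With `q = w = 0` the equations determine the other entries, and `0 ≤ r` becomes `hcubes`.
theorem isSymmRealizable_of_pos (hy : 0 < y) (hyx : y ≤ x) (hez : -e ≤ z) (hea : e ≤ a)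
    (hsum : a + x + y + z = e) (hcubes : 0 ≤ a ^ 3 + x ^ 3 + y ^ 3 + z ^ 3 + (-e) ^ 3) :
    IsSymmRealizable ![a, x, y, z, -e] := by
  have hx : 0 < x := hy.trans_le hyx
  have hz : z < 0 := by linarith
  have he : 0 < e := by linarith
  have ha : 0 < a := he.trans_le hea
  have hey : 0 < e - y := by linarith
  have haxz : a * x * z < 0 := mul_neg_of_pos_of_neg (mul_pos ha hx) hz
  obtain ⟨K, hK⟩ : ∃ K, K = -(y * e) - (a * x + a * z + x * z) := ⟨_, rfl⟩
  rw [sum_pow_three_eq_of_sum_eq hsum, ← hK] at hcubes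
  have hK_pos : 0 < K := pos_of_mul_pos_left (by linarith : 0 < K * (e - y)) hey.le
  obtain ⟨s, hs⟩ : ∃ s, s = -(a * x * z) / K := ⟨_, rfl⟩
  have hsK : K * s = -(a * x * z) := by rw [hs, mul_div_cancel₀ _ hK_pos.ne']
  have hs_nonneg : 0 ≤ s := hs ▸ div_nonneg (by linarith) hK_pos.le
  have hr : 0 ≤ e - y - s := nonneg_of_mul_nonneg_right (by linarith : 0 ≤ K * (e - y - s)) hK_pos
  have ht : 0 ≤ (e - y - s) * s + y * e := by positivity
  have hp_sq := Real.sq_sqrt (half_pos hK_pos).le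
  have ht_sq := Real.sq_sqrt ht
  refine isSymmRealizable_of_reflectionMatrix (p := √(K / 2)) (q := 0) (r := e - y - s) (s := s)
    (t := √((e - y - s) * s + y * e)) (w := 0) (Real.sqrt_nonneg _) le_rfl hr hs_nonneg
    (Real.sqrt_nonneg _) le_rfl ?_ ?_ ?_ ?_ ?_
  · ring
  · linear_combination -ht_sq
  · linear_combination -hsum
  · linear_combination -ht_sq - 2 * hp_sq - hK
  · linear_combination -2 * s * hp_sq - hsK

theorem exists_nonneg_mul_neg_sub_two_mul_eq (hyx : y ≤ x) (hzy : z ≤ y) (hy : y ≤ 0)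
    (hxe : x ≤ e) (hea : e ≤ a) (hsum : a + x + y + z = e) :
    ∃ c, 0 ≤ c ∧ c * (-y - 2 * z) = (a - e) * (e - x) := by
  have hnum : 0 ≤ (a - e) * (e - x) := mul_nonneg (by linarith) (by linarith)
  obtain hden | hden := (show 0 ≤ -y - 2 * z by linarith).eq_or_lt
  · have hae : a = e := by linarith
    exact ⟨0, le_rfl, by simp [hae]⟩
  · exact ⟨_, div_nonneg hnum hden.le, div_mul_cancel₀ _ hden.ne'⟩

theorem isSymmRealizable_of_nonpos (hyx : y ≤ x) (hzy : z ≤ y) (hy : y ≤ 0) (he : 0 ≤ e)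
    (hxe : x ≤ e) (hea : e ≤ a) (hsum : a + x + y + z = e) :
    IsSymmRealizable ![a, x, y, z, -e] := by
  obtain ⟨c, hc, hc_mul⟩ := exists_nonneg_mul_neg_sub_two_mul_eq hyx hzy hy hxe hea hsum
  obtain ⟨k, hk, hk_sq⟩ : ∃ k, 0 ≤ k ∧ k ^ 2 = c := ⟨_, Real.sqrt_nonneg _, Real.sq_sqrt hc⟩
  obtain ⟨m, hm, hm_sq⟩ : ∃ m, 0 ≤ m ∧ m ^ 2 = -y - z :=
    ⟨_, Real.sqrt_nonneg _, Real.sq_sqrt (by linarith)⟩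
  obtain ⟨n, hn, hn_sq⟩ : ∃ n, 0 ≤ n ∧ n ^ 2 = -z / 2 :=
    ⟨_, Real.sqrt_nonneg _, Real.sq_sqrt (by linarith)⟩
  -- In an orthonormal basis of even vectors, this choice acts as `z • 1 + v vᵀ` plus a multiple of
  -- the last diagonal unit, with `v = (√2 n, m, k)`; so `z` is an eigenvalue.
  refine isSymmRealizable_of_reflectionMatrix (p := n * m) (q := k * n) (r := -y) (s := e)
    (t := k * m / 2) (w := k * m / 2) (by positivity) (by positivity) (by linarith) he
    (by positivity) (by positivity) ?_ ?_ ?_ ?_ ?_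
  · ring
  · ring
  · linear_combination -hsum
  · calc -y * e - (k * m / 2 + k * m / 2) ^ 2 - 2 * (n * m) ^ 2 - 2 * (k * n) ^ 2
        = -y * e - k ^ 2 * m ^ 2 - 2 * n ^ 2 * m ^ 2 - 2 * k ^ 2 * n ^ 2 := by ring
      _ = a * x + a * z + x * z := by
        rw [hk_sq, hm_sq, hn_sq]
        obtain rfl : y = e - a - x - z := by linarith
        linear_combination -hc_mul
  · calc 4 * (n * m) * (k * n) * (k * m / 2 + k * m / 2) - 2 * (n * m) ^ 2 * e -
          2 * (k * n) ^ 2 * -y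
        = 4 * n ^ 2 * m ^ 2 * k ^ 2 - 2 * n ^ 2 * m ^ 2 * e + 2 * k ^ 2 * n ^ 2 * y := by ring
      _ = a * x * z := by
        rw [hk_sq, hm_sq, hn_sq]
        obtain rfl : y = e - a - x - z := by linarith
        linear_combination -z * hc_mul

end Construction

theorem stmt_3_general (d x y : ℝ) (hd : d ≤ 0)
    (h1 : x ≤ 1) (h2 : y ≤ x) (h3 : d - x - y ≤ y) (h4 : -d - 1 ≤ d - x - y) :
    IsSymmRealizable ![1, x, y, d - x - y, -d - 1] ↔
      (x ≤ d + 1 ∧ 0 ≤ 1 + x ^ 3 + y ^ 3 + (d - x - y) ^ 3 + (-d - 1) ^ 3) := by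
  constructor
  · intro h
    rw [← neg_add'] at h ⊢
    have hmin : min 1 x ≤ d + 1 := by
      refine h.min_le_of_forall_neg_le (i := 0) (j := 1) le_rfl ?_ (fun i => ?_) (by decide)
      · simp only [Fin.sum_univ_five, Matrix.cons_val]
        ring
      · fin_cases i <;>
          simp only [Fin.reduceFinMk, Fin.zero_eta, Fin.mk_one, Matrix.cons_val] <;> linarith
    refine ⟨min_eq_right h1 ▸ hmin, ?_⟩
    simpa only [Fin.sum_univ_five, Matrix.cons_val, one_pow] using h.sum_pow_nonneg 3
  · rintro ⟨hx, hcubes⟩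
    rw [← neg_add'] at hcubes ⊢
    obtain hy | hy := le_or_gt y 0
    · exact isSymmRealizable_of_nonpos h2 h3 hy (by linarith) hx (by linarith) (by ring)
    · exact isSymmRealizable_of_pos hy h2 (by linarith) (by linarith) (by ring) (by rwa [one_pow])

theorem stmt_3 (d x y : ℝ) (hd : d ∈ Set.Icc (-3/4 + Real.sqrt 5 / 4) (0 : ℝ))
    (h1 : x ≤ 1) (h2 : y ≤ x) (h3 : d - x - y ≤ y) (h4 : -d - 1 ≤ d - x - y) :
    (∃ A : Matrix (Fin 5) (Fin 5) ℝ, A.IsSymm ∧ (∀ i j, 0 ≤ A i j) ∧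
        A.charpoly =
          (X - C 1) * (X - C x) * (X - C y) * (X - C (d - x - y)) * (X + C (d + 1))) ↔
      (x ≤ d + 1 ∧ 0 ≤ 1 + x ^ 3 + y ^ 3 + (d - x - y) ^ 3 + (-d - 1) ^ 3) := by
  rw [← stmt_3_general d x y hd.2 h1 h2 h3 h4]
  simp [IsSymmRealizable, Fin.prod_univ_five, sub_eq_add_neg, add_comm]
end

section
/- Let d ∈ (−1/2, 0], let (x,y) lie in the triangle OBJ with y > 0, and set s₃ = s₃(x,y,d), u = √((−x² − xy + dx + dy + d + 1)/2), v = √((x+y)(x+1)(x−d)(x−d−1)(x+y+1)(x+y−d−1)). Let B(x,y) be 1/(2u²) times the 5×5 real symmetric matrix with rows (0, 0, 2u³, 0, 2u³), (0, 0, 0, (d+1)y, v), (2u³, 0, 0, v, s₃/3), (0, (d+1)y, v, 0, 0), (2u³, v, s₃/3, 0, 0). Then u > 0, v is the square root of a nonnegative quantity, and the characteristic polynomial of B(x,y) equals (t−1)(t−x)(t−y)(t−(d−x−y))(t+d+1); in particular the eigenvalues of B(x,y), with multiplicity, are 1, x, y, d−x−y, −d−1. -/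
open Polynomial Matrix

/-!
Exchanging the index pairs `{1, 2}` and `{3, 4}` leaves the matrix invariant. On antisymmetric
vectors it acts as `-S` and on symmetric ones as a bordered copy of `S`, where `S` is its
symmetric `2 × 2` off-diagonal block. Writing `z = d - x - y`, the values of `s₃`, `u` and `v` are
exactly those for which `S` has trace `-(x + z)` and determinant `x * z`, so `-S` contributes the
eigenvalues `x, z`. The entry `2u³` then makes the bordered block contribute `1, y, -d - 1`.
-/

section SwapInvariant

variable {R m n : Type*} [CommRing R] [Fintype m] [DecidableEq m] [Fintype n] [DecidableEq n]

theorem charpoly_eq_of_mul_eq_mul {M N P : Matrix n n R} (hP : IsUnit P) (h : M * P = P * N) :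
    M.charpoly = N.charpoly := by
  obtain ⟨P, rfl⟩ := hP
  rw [← charpoly_units_conj P N, ← h, mul_assoc, ← coe_units_inv, Units.mul_inv, mul_one]

theorem charpoly_fromBlocks_swap_invariant
    (A : Matrix m m R) (U : Matrix m n R) (W : Matrix n m R) (Q S : Matrix n n R) :
    (fromBlocks (fromBlocks A U W Q) (fromRows U S) (fromCols W S) Q).charpoly =
      (fromBlocks A (U + U) W (Q + S)).charpoly * (Q - S).charpoly := by
  -- `P` maps `(s, w, r)` to `(s, w, w + r)`: `r = 0` is the swap-invariant subspace.
  let P : Matrix ((m ⊕ n) ⊕ n) ((m ⊕ n) ⊕ n) R := fromBlocks 1 0 (fromCols 0 1) 1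
  have isUnit_P : IsUnit P := isUnit_fromBlocks_zero₁₂.2 ⟨isUnit_one, isUnit_one⟩
  rw [← charpoly_fromBlocks_zero₂₁ _ (fromRows U S)]
  refine charpoly_eq_of_mul_eq_mul isUnit_P ?_
  ext ((i | i) | i) ((j | j) | j) <;>
    simp [P, mul_apply, Fintype.sum_sum_type, one_apply, add_comm]

/-- The `5 × 5` pattern underlying `B(x, y)`: the block `S = !![b, c; c, e]` couples the index
pairs `{1, 2}` and `{3, 4}`, and the vector `(0, a)` couples each of them to the index `0`. -/
def swapMatrix (a b c e : R) : Matrix (Fin 5) (Fin 5) R :=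
  !![0, 0, a, 0, a;
     0, 0, 0, b, c;
     a, 0, 0, c, e;
     0, b, c, 0, 0;
     a, c, e, 0, 0]

theorem smul_swapMatrix (k a b c e : R) :
    k • swapMatrix a b c e = swapMatrix (k * a) (k * b) (k * c) (k * e) := by
  simp [swapMatrix]

theorem charpoly_neg_symm_fin_two (b c e : R) :
    (-!![b, c; c, e]).charpoly = X ^ 2 + C (b + e) * X + C (b * e - c ^ 2) := by
  nontriviality R
  rw [charpoly_fin_two]
  simp only [neg_of, neg_cons, neg_empty, trace_fin_two, Fin.isValue, of_apply, cons_val',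
    cons_val_zero, cons_val_fin_one, cons_val_one, map_add, map_neg, det_fin_two, map_sub, map_mul,
    map_pow]
  ring

theorem charpoly_bordered_fin_two (a b c e : R) :
    (fromBlocks (0 : Matrix (Fin 1) (Fin 1) R) !![0, 2 * a] !![0; a] !![b, c; c, e]).charpoly =
      X ^ 3 - C (b + e) * X ^ 2 + C (b * e - c ^ 2 - 2 * a ^ 2) * X + C (2 * a ^ 2 * b) := by
  have h_reindex : reindex finSumFinEquiv finSumFinEquiv
      (fromBlocks (0 : Matrix (Fin 1) (Fin 1) R) !![0, 2 * a] !![0; a] !![b, c; c, e]) =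
        !![0, 0, 2 * a; 0, b, c; a, c, e] := by
    ext i j
    fin_cases i <;> fin_cases j <;> rfl
  rw [← charpoly_reindex finSumFinEquiv, h_reindex, charpoly, det_fin_three]
  simp only [Nat.reduceAdd, Fin.isValue, charmatrix_apply_eq, of_apply, cons_val', cons_val_zero,
    cons_val_fin_one, map_zero, sub_zero, cons_val_one, cons_val, ne_eq, Fin.reduceEq,
    not_false_eq_true, charmatrix_apply_ne, zero_ne_one, one_ne_zero, map_mul, map_add, map_sub,
    map_pow]
  ring

theorem swapMatrix_eq_reindex (a b c e : R) :
    swapMatrix a b c e =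
      reindex ((finSumFinEquiv.sumCongr (.refl _)).trans finSumFinEquiv)
        ((finSumFinEquiv.sumCongr (.refl _)).trans finSumFinEquiv)
        (fromBlocks (fromBlocks (0 : Matrix (Fin 1) (Fin 1) R) !![0, a] !![0; a] 0)
          (fromRows !![0, a] !![b, c; c, e]) (fromCols !![0; a] !![b, c; c, e]) 0) := by
  ext i j
  fin_cases i <;> fin_cases j <;> rfl

theorem charpoly_swapMatrix (a b c e : R) :
    (swapMatrix a b c e).charpoly =
      (X ^ 3 - C (b + e) * X ^ 2 + C (b * e - c ^ 2 - 2 * a ^ 2) * X + C (2 * a ^ 2 * b)) *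
        (X ^ 2 + C (b + e) * X + C (b * e - c ^ 2)) := by
  have hU : !![0, a] + !![0, a] = !![0, 2 * a] := by simp [two_mul]
  rw [swapMatrix_eq_reindex, charpoly_reindex, charpoly_fromBlocks_swap_invariant, hU, zero_add,
    zero_sub, charpoly_bordered_fin_two, charpoly_neg_symm_fin_two]

theorem charpoly_swapMatrix_eq_prod {a b c e d x y : R}
    (htrace : b + e = y - d) (hdet : b * e - c ^ 2 = x * (d - x - y))
    (hsq : 2 * a ^ 2 = x * (d - x - y) + d * y + d + 1) (hmul : 2 * a ^ 2 * b = (d + 1) * y) :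
    (swapMatrix a b c e).charpoly =
      (X - C 1) * (X - C x) * (X - C y) * (X - C (d - x - y)) * (X + C (d + 1)) := by
  rw [charpoly_swapMatrix, hmul, htrace, hdet, hsq]
  simp only [map_add, map_sub, map_mul, map_one]
  ring

end SwapInvariant

section Parameters

variable {R : Type*} [CommRing R]

/-- The sum `s₃(x, y, d)` of the cubes of the five prescribed eigenvalues. -/
def cubeSum (d x y : R) : R :=
  1 + x ^ 3 + y ^ 3 + (d - x - y) ^ 3 + (-d - 1) ^ 3

/-- The polynomial in `d, x, y` that `2u²` equals in the definition of `B(x, y)`. -/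
def uRadicand (d x y : R) : R :=
  -x ^ 2 - x * y + d * x + d * y + d + 1

/-- The polynomial in `d, x, y` that `v²` equals in the definition of `B(x, y)`. -/
def vRadicand (d x y : R) : R :=
  (x + y) * (x + 1) * (x - d) * (x - d - 1) * (x + y + 1) * (x + y - d - 1)

theorem cubeSum_eq (d x y : R) :
    cubeSum d x y = 3 * ((y - d) * uRadicand d x y - (d + 1) * y) := by
  unfold cubeSum uRadicand
  ring

theorem vRadicand_eq (d x y : R) :
    vRadicand d x y =
      (d + 1) * y * ((y - d) * uRadicand d x y - (d + 1) * y) -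
        x * (d - x - y) * uRadicand d x y ^ 2 := by
  unfold vRadicand uRadicand
  ring

end Parameters

section Field

variable {K : Type*} [Field K] {d x y u v : K}

/-- The matrix `B(x, y)`, with `u` and `v` as free parameters so that it makes sense over any
field. -/
def spectralMatrix (d x y u v : K) : Matrix (Fin 5) (Fin 5) K :=
  (1 / (2 * u ^ 2)) • swapMatrix (2 * u ^ 3) ((d + 1) * y) v (cubeSum d x y / 3)

theorem spectralMatrix_eq_swapMatrix (h2u : 2 * u ^ 2 ≠ 0) :
    spectralMatrix d x y u v =
      swapMatrix u ((d + 1) * y / (2 * u ^ 2)) (v / (2 * u ^ 2))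
        (cubeSum d x y / 3 / (2 * u ^ 2)) := by
  have hu : 1 / (2 * u ^ 2) * (2 * u ^ 3) = u := by
    rw [pow_succ u 2, ← mul_assoc, ← mul_assoc, mul_assoc (1 / _), one_div_mul_cancel h2u, one_mul]
  simp only [spectralMatrix, smul_swapMatrix, hu, one_div_mul_eq_div]

theorem charpoly_spectralMatrix (h3 : (3 : K) ≠ 0) (h2u : 2 * u ^ 2 ≠ 0)
    (hu : 2 * u ^ 2 = uRadicand d x y) (hv : v ^ 2 = vRadicand d x y) :
    (spectralMatrix d x y u v).charpoly =
      (X - C 1) * (X - C x) * (X - C y) * (X - C (d - x - y)) * (X + C (d + 1)) := by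
  have hs : cubeSum d x y / 3 = (y - d) * (2 * u ^ 2) - (d + 1) * y := by
    rw [cubeSum_eq, mul_div_cancel_left₀ _ h3, hu]
  rw [vRadicand_eq, ← hu] at hv
  rw [spectralMatrix_eq_swapMatrix h2u, hs]
  apply charpoly_swapMatrix_eq_prod
  · rw [← add_div, add_sub_cancel, mul_div_cancel_right₀ _ h2u]
  · rw [div_pow, hv, div_mul_div_comm, ← sq, ← sub_div, sub_sub_cancel,
      mul_div_cancel_right₀ _ (pow_ne_zero 2 h2u)]
  · rw [hu, uRadicand]
    ring
  · exact mul_div_cancel₀ _ h2u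

end Field

section Real

variable {d x y : ℝ}

theorem uRadicand_pos (hd : -1 < d) (hxd : x < d + 1) (hxy0 : 0 ≤ x + y)
    (hxy : x + y ≤ d + 1) : 0 < uRadicand d x y := by
  suffices (x + y) * (x - d) < d + 1 by
    unfold uRadicand
    linarith
  obtain h0 | hpos := hxy0.eq_or_lt
  · rw [← h0, zero_mul]
    linarith
  · calc (x + y) * (x - d) < (x + y) * 1 := by gcongr; linarith
      _ ≤ d + 1 := by rwa [mul_one]

theorem vRadicand_nonneg (hd : -1 ≤ d) (hdx : d ≤ x) (hxd : x ≤ d + 1) (hxy0 : 0 ≤ x + y)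
    (hxy : x + y ≤ d + 1) : 0 ≤ vRadicand d x y := by
  have hx1 : 0 ≤ x + 1 := by linarith
  have hneg : 0 ≤ (x - d - 1) * (x + y - d - 1) :=
    mul_nonneg_of_nonpos_of_nonpos (by linarith) (by linarith)
  calc 0 ≤ (x + y) * (x + 1) * (x - d) * (x + y + 1) * ((x - d - 1) * (x + y - d - 1)) := by
        have := sub_nonneg.2 hdx
        positivity
    _ = vRadicand d x y := by
        unfold vRadicand
        ring

theorem stmt_18_general (hd : -1 < d) (hdx : d ≤ x) (hxd : x < d + 1) (hxy0 : 0 ≤ x + y)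
    (hxy : x + y ≤ d + 1) :
    0 < √(uRadicand d x y / 2) ∧
      0 ≤ vRadicand d x y ∧
      (spectralMatrix d x y √(uRadicand d x y / 2) √(vRadicand d x y)).charpoly =
        (X - C 1) * (X - C x) * (X - C y) * (X - C (d - x - y)) * (X + C (d + 1)) := by
  have hu := half_pos (uRadicand_pos hd hxd hxy0 hxy)
  have hv := vRadicand_nonneg hd.le hdx hxd.le hxy0 hxy
  have hu_sqrt := Real.sqrt_pos.2 hu
  refine ⟨hu_sqrt, hv, charpoly_spectralMatrix three_ne_zero (by positivity) ?_ (Real.sq_sqrt hv)⟩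
  rw [Real.sq_sqrt hu.le, mul_div_cancel₀ _ two_ne_zero]

end Real

theorem stmt_18 (d x y : ℝ) (hd : d ∈ Set.Ioc (-1/2 : ℝ) 0)
    (hy0 : 0 < y) (hyx : y ≤ x) (hxy : y ≤ -x + 2*d + 1) :
    (let s₃ := 1 + x^3 + y^3 + (d - x - y)^3 + (-d - 1)^3;
     let u := Real.sqrt ((-x^2 - x*y + d*x + d*y + d + 1)/2);
     let v := Real.sqrt ((x + y)*(x + 1)*(x - d)*(x - d - 1)*(x + y + 1)*(x + y - d - 1));
     let B : Matrix (Fin 5) (Fin 5) ℝ := (1/(2*u^2)) •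
       !![0,      0,        2*u^3, 0,        2*u^3;
          0,      0,        0,     (d + 1)*y, v;
          2*u^3,  0,        0,     v,        s₃/3;
          0,      (d + 1)*y, v,    0,        0;
          2*u^3,  v,        s₃/3,  0,        0];
     0 < u ∧
     0 ≤ (x + y)*(x + 1)*(x - d)*(x - d - 1)*(x + y + 1)*(x + y - d - 1) ∧
     B.charpoly =
       (X - C 1) * (X - C x) * (X - C y) * (X - C (d - x - y)) * (X + C (d + 1))) := by
  have hd0 := hd.2
  exact stmt_18_general (by linarith) (by linarith) (by linarith) (by linarith) (by linarith)
end
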